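/- Let α and β be alternating 2-forms on ℝ⁷, each satisfying Σ_{j,k=1}^{7} ε_{ijk} γ(e_j,e_k) = 0 for every i ∈ {1,…,7} (γ = α, β). Then there exists g ∈ GL(7,ℝ) with g*φ = φ and g*α = β if and only if |α|² = |β|² and |α∧α∧α|² = |β∧β∧β|², where |γ|² := Σ_{a<b} γ(e_a,e_b)² and the squared norm of a 6-form ξ is |ξ|² := Σ_{a₁<⋯<a₆} ξ(e_{a₁},…,e_{a₆})². -/

import Mathlib

open scoped BigOperators Matrix

noncomputable section

namespace G2

/-- The standard basis vector `e i` of `ℝ⁷`. -/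
def e (i : Fin 7) : Fin 7 → ℝ := fun j => if j = i then 1 else 0

/-- The 3-form `e^a ∧ e^b ∧ e^c` (determinant convention), evaluated on `(x, y, z)`. -/
def w3 (a b c : Fin 7) (x y z : Fin 7 → ℝ) : ℝ :=
  x a * (y b * z c - y c * z b) - x b * (y a * z c - y c * z a)
    + x c * (y a * z b - y b * z a)

/-- The 4-form `e^a ∧ e^b ∧ e^c ∧ e^d`, evaluated on `(x, y, z, w)`. -/
def w4 (a b c d : Fin 7) (x y z w : Fin 7 → ℝ) : ℝ :=
  Matrix.det !![x a, x b, x c, x d; y a, y b, y c, y d;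
                z a, z b, z c, z d; w a, w b, w c, w d]

/-- The fundamental `G₂` 3-form
`φ = e^{123}+e^{145}+e^{167}+e^{246}-e^{257}-e^{347}-e^{356}` (indices shifted to start at 0),
as a trilinear alternating function of three vectors. -/
def phi (x y z : Fin 7 → ℝ) : ℝ :=
  w3 0 1 2 x y z + w3 0 3 4 x y z + w3 0 5 6 x y z + w3 1 3 5 x y z
    - w3 1 4 6 x y z - w3 2 3 6 x y z - w3 2 4 5 x y z

/-- The 4-form `ψ = *φ = e^{4567}+e^{2367}+e^{2345}+e^{1357}-e^{1346}-e^{1256}-e^{1247}`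
(indices shifted to start at 0), as a function of four vectors. -/
def psi (x y z w : Fin 7 → ℝ) : ℝ :=
  w4 3 4 5 6 x y z w + w4 1 2 5 6 x y z w + w4 1 2 3 4 x y z w + w4 0 2 4 6 x y z w
    - w4 0 2 3 5 x y z w - w4 0 1 4 5 x y z w - w4 0 1 3 6 x y z w

/-- `ε_{ijk} = φ(e_i, e_j, e_k)`. -/
def eps (i j k : Fin 7) : ℝ := phi (e i) (e j) (e k)

/-- `ε_{ijkl} = ψ(e_i, e_j, e_k, e_l)`. -/
def eps4 (i j k l : Fin 7) : ℝ := psi (e i) (e j) (e k) (e l)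

/-- The volume form `e^1 ∧ ⋯ ∧ e^7`, evaluated on a 7-tuple of vectors. -/
def vol (v : Fin 7 → (Fin 7 → ℝ)) : ℝ := Matrix.det (Matrix.of fun i j => v i j)

/-- The matrix `[v]` with `[v]_{ij} = Σ_k ε_{ijk} v_k`. -/
def bracket (v : Fin 7 → ℝ) : Matrix (Fin 7) (Fin 7) ℝ :=
  Matrix.of fun i j => ∑ k : Fin 7, eps i j k * v k

/-- The vector `⟨A⟩` with `⟨A⟩_i = Σ_{j,k} ε_{ijk} A_{jk}`. -/
def angle (A : Matrix (Fin 7) (Fin 7) ℝ) : Fin 7 → ℝ :=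
  fun i => ∑ j : Fin 7, ∑ k : Fin 7, eps i j k * A j k

/-- Wedge product of two 2-forms (determinant convention), evaluated on four vectors. -/
def wedge22 (A B : (Fin 7 → ℝ) → (Fin 7 → ℝ) → ℝ) (v : Fin 4 → (Fin 7 → ℝ)) : ℝ :=
  (1 / 4 : ℝ) * ∑ σ : Equiv.Perm (Fin 4),
    ((Equiv.Perm.sign σ : ℤ) : ℝ) * (A (v (σ 0)) (v (σ 1)) * B (v (σ 2)) (v (σ 3)))

/-- Wedge product of three 2-forms (determinant convention), evaluated on six vectors. -/
def wedge222 (A B C : (Fin 7 → ℝ) → (Fin 7 → ℝ) → ℝ) (v : Fin 6 → (Fin 7 → ℝ)) : ℝ :=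
  (1 / 8 : ℝ) * ∑ σ : Equiv.Perm (Fin 6),
    ((Equiv.Perm.sign σ : ℤ) : ℝ) *
      (A (v (σ 0)) (v (σ 1)) * B (v (σ 2)) (v (σ 3)) * C (v (σ 4)) (v (σ 5)))

/-- Wedge product of two 2-forms and a 3-form (determinant convention),
evaluated on seven vectors. -/
def wedge223 (A B : (Fin 7 → ℝ) → (Fin 7 → ℝ) → ℝ)
    (C : (Fin 7 → ℝ) → (Fin 7 → ℝ) → (Fin 7 → ℝ) → ℝ)
    (v : Fin 7 → (Fin 7 → ℝ)) : ℝ :=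
  (1 / 24 : ℝ) * ∑ σ : Equiv.Perm (Fin 7),
    ((Equiv.Perm.sign σ : ℤ) : ℝ) *
      (A (v (σ 0)) (v (σ 1)) * B (v (σ 2)) (v (σ 3)) * C (v (σ 4)) (v (σ 5)) (v (σ 6)))

/-- The map `i_φ : S²(ℝ⁷)* → Λ³(ℝ⁷)*`,
`i_φ(h) = Σ_{i,j,k,l} ε_{ikl} h_{ij} e^j ∧ e^k ∧ e^l`, evaluated on `(x, y, z)`. -/
def iphi (h : Fin 7 → Fin 7 → ℝ) (x y z : Fin 7 → ℝ) : ℝ :=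
  ∑ i : Fin 7, ∑ j : Fin 7, ∑ k : Fin 7, ∑ l : Fin 7, eps i k l * h i j * w3 j k l x y z

/-- The squared norm `Σ_{a<b} γ(e_a,e_b)²` of a 2-form. -/
def normSq2 (γ : AlternatingMap ℝ (Fin 7 → ℝ) ℝ (Fin 2)) : ℝ :=
  ∑ a : Fin 7, ∑ b : Fin 7, if a < b then (γ ![e a, e b]) ^ 2 else 0

/-- The squared norm `Σ_{a₁<⋯<a₆} (γ∧γ∧γ)(e_{a₁},…,e_{a₆})²` of the cube of a 2-form. -/
def normSqCube (γ : AlternatingMap ℝ (Fin 7 → ℝ) ℝ (Fin 2)) : ℝ :=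
  ∑ a₁ : Fin 7, ∑ a₂ : Fin 7, ∑ a₃ : Fin 7, ∑ a₄ : Fin 7, ∑ a₅ : Fin 7, ∑ a₆ : Fin 7,
    if a₁ < a₂ ∧ a₂ < a₃ ∧ a₃ < a₄ ∧ a₄ < a₅ ∧ a₅ < a₆ then
      (wedge222 (fun x y => γ ![x, y]) (fun x y => γ ![x, y]) (fun x y => γ ![x, y])
        ![e a₁, e a₂, e a₃, e a₄, e a₅, e a₆]) ^ 2
    else 0

/-
A form `γ ∈ Λ²₁₄` is the same thing as a skew derivation `A` of the cross product of `φ`. Such an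
`A` kills a unit vector `a`, and commutes with the complex structure `a × ·` on `a^⊥`.
Diagonalising the symmetric operator `x ↦ a × A x` therefore yields orthonormal `b, c` with
`c ⊥ a × b` such that `A` acts on the planes spanned by `x, a × x`, for `x = b, c, b × c`, with
rotation speeds `l, m, n`, and the derivation property forces `l + m + n = 0`. The stabilizer of
`φ` is transitive on such triples `(a, b, c)`, so `γ` is conjugate to
`l e^{23} + m e^{45} + n e^{67}`. Replacing `(a, b, c)` by `(-a, b, c)`, `(a, c, b)` or
`(a, b, b × c)` shows that `(l, m, n)` matters only up to permutation and a common sign. Up to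
these, `l + m + n = 0`, `|γ|² = l² + m² + n²` and `|γ∧γ∧γ|² = 36 (l m n)²` determine `(l, m, n)`;
and both norms are invariant because the stabilizer of `φ` is orthogonal.
-/

section LinearAlgebra

lemma matrix_ext_dotProduct_mulVec {m n R : Type*} [Fintype m] [Fintype n] [CommSemiring R]
    {A B : Matrix m n R} (h : ∀ x y, x ⬝ᵥ A *ᵥ y = x ⬝ᵥ B *ᵥ y) : A = B := by
  classical
  exact Matrix.ext_of_mulVec_single fun j => dotProduct_eq _ _ fun x => by
    rw [dotProduct_comm, h, dotProduct_comm]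

lemma mulVec_dotProduct {m n R : Type*} [Fintype m] [Fintype n] [CommSemiring R]
    (A : Matrix m n R) (x : n → R) (y : m → R) : A *ᵥ x ⬝ᵥ y = x ⬝ᵥ Aᵀ *ᵥ y := by
  rw [Matrix.mulVec_transpose, dotProduct_comm, Matrix.dotProduct_mulVec, dotProduct_comm]

lemma dotProduct_self_pos {n : Type*} [Fintype n] {x : n → ℝ} (hx : x ≠ 0) : 0 < x ⬝ᵥ x := by
  simpa using Matrix.dotProduct_star_self_pos_iff.mpr hx

lemma det_smul_one_add_vecMulVec {n K : Type*} [Fintype n] [DecidableEq n] [Field K] {r : K}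
    (hr : r ≠ 0) (u v : n → K) :
    (r • (1 : Matrix n n K) + Matrix.vecMulVec u v).det =
      r ^ Fintype.card n * (1 + r⁻¹ * (v ⬝ᵥ u)) := by
  have h : r • (1 : Matrix n n K) + Matrix.vecMulVec u v =
      r • (1 + Matrix.vecMulVec (r⁻¹ • u) v) := by
    rw [smul_add, Matrix.smul_vecMulVec, smul_inv_smul₀ hr]
  rw [h, Matrix.det_smul, Matrix.vecMulVec_eq Unit,
    Matrix.det_one_add_replicateCol_mul_replicateRow, dotProduct_smul, smul_eq_mul]

lemma eq_smul_one_of_forall_eigenvalue_eq {n : Type*} [Fintype n] [DecidableEq n]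
    {A : Matrix n n ℝ} (hA : A.IsHermitian) {c : ℝ}
    (h : ∀ x ≠ 0, ∀ μ : ℝ, A *ᵥ x = μ • x → μ = c) : A = c • 1 := by
  have heig : hA.eigenvalues = Function.const n c := funext fun i =>
    h (hA.eigenvectorBasis i) (by simpa using hA.eigenvectorBasis.toBasis.ne_zero i) _
      (hA.mulVec_eigenvectorBasis i)
  have hdiag : Matrix.diagonal (RCLike.ofReal ∘ Function.const n c) = c • (1 : Matrix n n ℝ) := by
    ext i j
    simp [Matrix.diagonal_apply, Matrix.one_apply]
  conv_lhs => rw [hA.spectral_theorem, heig, hdiag, map_smul, map_one]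

lemma exists_unit_eigenvector_of_mem_invtSubmodule {E : Type*} [NormedAddCommGroup E]
    [InnerProductSpace ℝ E] [FiniteDimensional ℝ E] {T : E →ₗ[ℝ] E} (hT : T.IsSymmetric)
    {K : Submodule ℝ E} (hK : K ∈ Module.End.invtSubmodule T) (hK₀ : K ≠ ⊥) :
    ∃ x ∈ K, ‖x‖ = 1 ∧ ∃ μ : ℝ, T x = μ • x := by
  have := Submodule.nontrivial_iff_ne_bot.mpr hK₀
  obtain ⟨μ, hμ⟩ : ∃ μ : ℝ, Module.End.HasEigenvalue (T.restrict hK) μ :=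
    ⟨_, (hT.restrict_invariant hK).hasEigenvalue_iSup_of_finiteDimensional⟩
  obtain ⟨x, hx⟩ := hμ.exists_hasEigenvector
  have hx₀ : (x : E) ≠ 0 := by simpa using hx.2
  have hTx : T x = μ • (x : E) := congrArg ((↑) : K → E) hx.apply_eq_smul
  refine ⟨‖(x : E)‖⁻¹ • x, K.smul_mem _ x.2, norm_smul_inv_norm (𝕜 := ℝ) hx₀, μ, ?_⟩
  rw [map_smul, hTx, smul_comm]

lemma exists_unit_eigenvector_orthogonal {ι n : Type*} [Fintype ι] [Fintype n]
    {S : Matrix n n ℝ} (hS : Sᵀ = S) {v : ι → n → ℝ} (hv : ∀ i, ∃ μ : ℝ, S *ᵥ v i = μ • v i)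
    (hcard : Fintype.card ι < Fintype.card n) :
    ∃ x, x ⬝ᵥ x = 1 ∧ (∀ i, v i ⬝ᵥ x = 0) ∧ ∃ μ : ℝ, S *ᵥ x = μ • x := by
  classical
  set U := Submodule.span ℝ (Set.range fun i => WithLp.toLp 2 (v i)) with hU
  have hsymm : (Matrix.toEuclideanLin S).IsSymmetric := Matrix.isSymmetric_toEuclideanLin_iff.mpr hS
  have hinvt : U ∈ Module.End.invtSubmodule (Matrix.toEuclideanLin S) := by
    rw [Module.End.mem_invtSubmodule, hU, Submodule.span_le]
    rintro _ ⟨i, rfl⟩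
    obtain ⟨μ, hμ⟩ := hv i
    have h : Matrix.toEuclideanLin S (WithLp.toLp 2 (v i)) = μ • WithLp.toLp 2 (v i) := by
      rw [Matrix.toLpLin_toLp, Matrix.toLin'_apply, hμ, WithLp.toLp_smul]
    rw [SetLike.mem_coe, Submodule.mem_comap, h]
    exact U.smul_mem μ (Submodule.subset_span ⟨i, rfl⟩)
  have hbot : Uᗮ ≠ ⊥ := by
    rw [Ne, Submodule.orthogonal_eq_bot_iff]
    intro htop
    have h := finrank_range_le_card (R := ℝ) fun i => WithLp.toLp 2 (v i)
    rw [Set.finrank, ← hU, htop, finrank_top, finrank_euclideanSpace] at h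
    exact hcard.not_ge h
  obtain ⟨x, hxU, hx, μ, hμ⟩ := exists_unit_eigenvector_of_mem_invtSubmodule hsymm
    (hsymm.orthogonalComplement_mem_invtSubmodule hinvt) hbot
  refine ⟨x.ofLp, ?_, fun i => ?_, μ, congrArg WithLp.ofLp hμ⟩
  · have h := real_inner_self_eq_norm_sq x
    rwa [hx, one_pow] at h
  · rw [dotProduct_comm]
    exact hxU _ (Submodule.subset_span ⟨i, rfl⟩)

lemma det_eq_zero_of_transpose_eq_neg {n R : Type*} [Fintype n] [DecidableEq n] [CommRing R]
    [NoZeroDivisors R] [NeZero (2 : R)] (hn : Odd (Fintype.card n)) {A : Matrix n n R}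
    (hA : Aᵀ = -A) : A.det = 0 := by
  have h : A.det = -A.det := by
    conv_lhs => rw [← Matrix.det_transpose, hA, Matrix.det_neg, hn.neg_one_pow, neg_one_mul]
  rw [← add_eq_zero_iff_eq_neg, ← two_mul] at h
  exact (mul_eq_zero.mp h).resolve_left two_ne_zero

lemma exists_unit_mulVec_eq_zero {n : Type*} [Fintype n] [DecidableEq n] {A : Matrix n n ℝ}
    (hA : A.det = 0) : ∃ x, x ⬝ᵥ x = 1 ∧ A *ᵥ x = 0 := by
  obtain ⟨x, hx, hAx⟩ := Matrix.exists_mulVec_eq_zero_iff.mpr hA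
  have hpos := dotProduct_self_pos hx
  refine ⟨(√(x ⬝ᵥ x))⁻¹ • x, ?_, by rw [Matrix.mulVec_smul, hAx, smul_zero]⟩
  rw [smul_dotProduct, dotProduct_smul, smul_smul, ← mul_inv, Real.mul_self_sqrt hpos.le,
    smul_eq_mul, inv_mul_cancel₀ hpos.ne']

lemma mulVec_eq_sum_of_transpose_eq_neg {n : Type*} [Fintype n] [DecidableEq n]
    {A : Matrix n n ℝ} (hA : Aᵀ = -A) (x : n → ℝ) :
    A *ᵥ x = (1 / 2 : ℝ) •
      ∑ j, ((A j ⬝ᵥ x) • Pi.single j 1 - (Pi.single j 1 ⬝ᵥ x) • A j) := by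
  have hvec : A *ᵥ x = ∑ j, (A j ⬝ᵥ x) • Pi.single j 1 := pi_eq_sum_univ' _
  have hvecMul : -(A *ᵥ x) = ∑ j, (Pi.single j 1 ⬝ᵥ x) • A j := by
    rw [← Matrix.neg_mulVec, ← hA, Matrix.mulVec_transpose, Matrix.vecMul_eq_sum]
    simp
  rw [Finset.sum_sub_distrib, ← hvec, ← hvecMul]
  module

end LinearAlgebra

section AlternatingForms

variable {k n : ℕ}

/-- The tuple `(e_{a₁},…,e_{a_k})` of standard basis vectors of `ℝⁿ` with multi-index `a`. -/
abbrev basisTuple (a : Fin k → Fin n) (i : Fin k) : Fin n → ℝ := Pi.single (a i) 1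

/-- The squared Euclidean norm `Σ_{a₁<⋯<a_k} ω(e_{a₁},…,e_{a_k})²` of a `k`-form on `ℝⁿ`. -/
def normSq (ω : (Fin n → ℝ) [⋀^Fin k]→ₗ[ℝ] ℝ) : ℝ :=
  ∑ a : Fin k → Fin n with StrictMono a, ω (basisTuple a) ^ 2

/-- The pullback `M^*ω` of a `k`-form along the linear map with matrix `M`. -/
def pullback (M : Matrix (Fin n) (Fin n) ℝ) (ω : (Fin n → ℝ) [⋀^Fin k]→ₗ[ℝ] ℝ) :
    (Fin n → ℝ) [⋀^Fin k]→ₗ[ℝ] ℝ :=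
  ω.compLinearMap M.mulVecLin

lemma pullback_apply (M : Matrix (Fin n) (Fin n) ℝ) (ω : (Fin n → ℝ) [⋀^Fin k]→ₗ[ℝ] ℝ)
    (v : Fin k → Fin n → ℝ) : pullback M ω v = ω fun i => M *ᵥ v i := rfl

lemma pullback_pullback (M N : Matrix (Fin n) (Fin n) ℝ) (ω : (Fin n → ℝ) [⋀^Fin k]→ₗ[ℝ] ℝ) :
    pullback N (pullback M ω) = pullback (M * N) ω := by
  ext v
  simp only [pullback_apply, Matrix.mulVec_mulVec]

lemma pullback_one (ω : (Fin n → ℝ) [⋀^Fin k]→ₗ[ℝ] ℝ) : pullback 1 ω = ω := by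
  ext v
  simp only [pullback_apply, Matrix.one_mulVec]

lemma pullback_apply_pair (M : Matrix (Fin n) (Fin n) ℝ) (γ : (Fin n → ℝ) [⋀^Fin 2]→ₗ[ℝ] ℝ)
    (x y : Fin n → ℝ) : pullback M γ ![x, y] = γ ![M *ᵥ x, M *ᵥ y] := by
  rw [pullback_apply]
  congr 1
  ext i
  fin_cases i <;> rfl

lemma twoForm_ext {γ δ : (Fin n → ℝ) [⋀^Fin 2]→ₗ[ℝ] ℝ} (h : ∀ x y, γ ![x, y] = δ ![x, y]) :
    γ = δ := by
  ext v
  have hv : v = ![v 0, v 1] := by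
    ext i
    fin_cases i <;> rfl
  rw [hv, h]

lemma existsUnique_perm_strictMono_comp {a : Fin k → Fin n} (ha : Function.Injective a) :
    ∃! σ : Equiv.Perm (Fin k), StrictMono (a ∘ σ) := by
  refine ⟨Tuple.sort a, (Tuple.monotone_sort a).strictMono_of_injective
    (ha.comp (Tuple.sort a).injective), fun τ hτ => ?_⟩
  have h := Tuple.unique_monotone hτ.monotone (Tuple.monotone_sort a)
  exact Equiv.ext fun i => ha (congrFun h i)

lemma sum_eq_factorial_mul_sum_strictMono {R : Type*} [NonAssocSemiring R]
    (G : (Fin k → Fin n) → R)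
    (hperm : ∀ (σ : Equiv.Perm (Fin k)) a, G (a ∘ σ) = G a)
    (hinj : ∀ a, ¬ Function.Injective a → G a = 0) :
    ∑ a, G a = k.factorial * ∑ a with StrictMono a, G a := by
  classical
  have hone (a : Fin k → Fin n) :
      ∑ σ : Equiv.Perm (Fin k), (if StrictMono (a ∘ σ) then G a else 0) = G a := by
    by_cases ha : Function.Injective a
    · obtain ⟨σ, hσ, huniq⟩ := existsUnique_perm_strictMono_comp ha
      rw [Finset.sum_eq_single σ (fun τ _ hτ => if_neg fun h => hτ (huniq τ h)) (by simp),
        if_pos hσ]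
    · simp [hinj a ha]
  have hreindex (σ : Equiv.Perm (Fin k)) :
      ∑ a, (if StrictMono (a ∘ σ) then G a else 0) = ∑ a with StrictMono a, G a := by
    rw [Finset.sum_filter, ← (σ.arrowCongr (Equiv.refl (Fin n))).sum_comp]
    exact Finset.sum_congr rfl fun a _ => by
      simp [Equiv.arrowCongr, hperm, Function.comp_assoc]
  calc ∑ a, G a
      = ∑ a, ∑ σ : Equiv.Perm (Fin k), if StrictMono (a ∘ σ) then G a else 0 := by
        simp only [hone]
    _ = k.factorial * ∑ a with StrictMono a, G a := by
        rw [Finset.sum_comm]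
        simp only [hreindex, Finset.sum_const, Finset.card_univ, Fintype.card_perm,
          Fintype.card_fin, nsmul_eq_mul]

lemma factorial_mul_normSq (ω : (Fin n → ℝ) [⋀^Fin k]→ₗ[ℝ] ℝ) :
    k.factorial * normSq ω = ∑ a : Fin k → Fin n, ω (basisTuple a) ^ 2 := by
  refine (sum_eq_factorial_mul_sum_strictMono _ (fun σ a => ?_) fun a ha => ?_).symm
  · have h : ω (basisTuple (a ∘ σ)) = Equiv.Perm.sign σ • ω (basisTuple a) :=
      ω.map_perm (basisTuple a) σ
    rw [h]
    rcases Int.units_eq_one_or (Equiv.Perm.sign σ) with hσ | hσ <;> simp [hσ]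
  · obtain ⟨i, j, hij, hne⟩ := Function.not_injective_iff.mp ha
    have h : basisTuple a i = basisTuple a j := congrArg (Pi.single · 1) hij
    rw [ω.map_eq_zero_of_eq _ h hne, zero_pow two_ne_zero]

lemma multilinear_apply_mulVec_single (f : MultilinearMap ℝ (fun _ : Fin k => Fin n → ℝ) ℝ)
    (M : Matrix (Fin n) (Fin n) ℝ) (a : Fin k → Fin n) :
    f (fun i => M *ᵥ basisTuple a i) =
      ∑ b : Fin k → Fin n, (∏ i, M (b i) (a i)) * f (basisTuple b) := by
  have hcol (j : Fin n) : M *ᵥ Pi.single j 1 = ∑ i, M i j • Pi.single i (1 : ℝ) := by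
    ext l
    simp [Finset.sum_apply, Pi.single_apply]
  simp only [hcol, f.map_sum, f.map_smul_univ, smul_eq_mul]

lemma sum_sq_multilinear_mulVec (f : MultilinearMap ℝ (fun _ : Fin k => Fin n → ℝ) ℝ)
    {M : Matrix (Fin n) (Fin n) ℝ} (hM : M * Mᵀ = 1) :
    ∑ a : Fin k → Fin n, f (fun i => M *ᵥ basisTuple a i) ^ 2 =
      ∑ a : Fin k → Fin n, f (basisTuple a) ^ 2 := by
  have horth (b c : Fin k → Fin n) :
      ∑ a : Fin k → Fin n, (∏ i, M (b i) (a i)) * ∏ i, M (c i) (a i) = if b = c then 1 else 0 := by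
    have hentry (i : Fin k) : ∑ j, M (b i) j * M (c i) j = if b i = c i then 1 else 0 := by
      rw [← Matrix.one_apply, ← hM, Matrix.mul_apply]
      rfl
    simp only [← Finset.prod_mul_distrib,
      ← Fintype.prod_sum fun i j => M (b i) j * M (c i) j, hentry, Fintype.prod_ite_zero,
      Finset.prod_const_one, funext_iff]
  simp only [multilinear_apply_mulVec_single, sq, Finset.sum_mul_sum]
  rw [Finset.sum_comm]
  refine Finset.sum_congr rfl fun b _ => ?_
  rw [Finset.sum_comm]
  calc ∑ c : Fin k → Fin n, ∑ a : Fin k → Fin n,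
        (∏ i, M (b i) (a i)) * f (basisTuple b) *
          ((∏ i, M (c i) (a i)) * f (basisTuple c))
      = ∑ c : Fin k → Fin n, (if b = c then 1 else 0) *
          (f (basisTuple b) * f (basisTuple c)) := by
        refine Finset.sum_congr rfl fun c _ => ?_
        rw [← horth, Finset.sum_mul]
        exact Finset.sum_congr rfl fun a _ => by ring
    _ = _ := by simp

lemma normSq_pullback (ω : (Fin n → ℝ) [⋀^Fin k]→ₗ[ℝ] ℝ) {M : Matrix (Fin n) (Fin n) ℝ}
    (hM : M * Mᵀ = 1) : normSq (pullback M ω) = normSq ω := by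
  have h : (k.factorial : ℝ) * normSq (pullback M ω) = k.factorial * normSq ω := by
    rw [factorial_mul_normSq, factorial_mul_normSq]
    exact sum_sq_multilinear_mulVec ω.toMultilinearMap hM
  exact mul_left_cancel₀ (mod_cast k.factorial_ne_zero) h

lemma pullback_diagonal_apply_single (ω : (Fin n → ℝ) [⋀^Fin k]→ₗ[ℝ] ℝ) (d : Fin n → ℝ)
    (a : Fin k → Fin n) :
    pullback (Matrix.diagonal d) ω (basisTuple a) =
      (∏ i, d (a i)) * ω (basisTuple a) := by
  have hcol (j : Fin n) : Matrix.diagonal d *ᵥ Pi.single j 1 = d j • Pi.single j (1 : ℝ) := by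
    ext l
    simp [Pi.single_apply]
  simp only [pullback_apply, hcol]
  exact ω.toMultilinearMap.map_smul_univ (fun i => d (a i)) _

lemma sum_fin_succ_arrow {α M : Type*} [Fintype α] [AddCommMonoid M]
    (F : (Fin (k + 1) → α) → M) :
    ∑ a, F a = ∑ x, ∑ a : Fin k → α, F (Matrix.vecCons x a) := by
  rw [← (Fin.consEquiv fun _ => α).sum_comp, Fintype.sum_prod_type]
  rfl

lemma sum_fin_zero_arrow {α M : Type*} [Fintype α] [AddCommMonoid M] (F : (Fin 0 → α) → M) :
    ∑ a, F a = F ![] := by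
  rw [Fintype.sum_unique]
  exact congrArg F (Subsingleton.elim _ _)

lemma basisTuple_vecCons (x : Fin n) (a : Fin k → Fin n) :
    basisTuple (Matrix.vecCons x a) = Matrix.vecCons (Pi.single x 1) (basisTuple a) := by
  ext i
  refine Fin.cases ?_ (fun i => ?_) i <;> rfl

lemma basisTuple_empty (a : Fin 0 → Fin n) : basisTuple a = ![] := Subsingleton.elim _ _

lemma strictMono_fin_zero_add_one (a : Fin (0 + 1) → Fin n) : StrictMono a :=
  Subsingleton.strictMono (α := Fin 1) a

lemma e_eq_single (i : Fin 7) : e i = Pi.single i 1 := by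
  ext j
  simp [e, Pi.single_apply]

lemma normSq2_eq_normSq (γ : (Fin 7 → ℝ) [⋀^Fin 2]→ₗ[ℝ] ℝ) : normSq2 γ = normSq γ := by
  simp only [normSq2, normSq, e_eq_single, Finset.sum_filter, sum_fin_succ_arrow,
    basisTuple_vecCons, basisTuple_empty, strictMono_vecCons, Matrix.cons_val_zero,
    sum_fin_zero_arrow, strictMono_fin_zero_add_one, and_true]

/-- A 2-form on `ℝⁿ`, regarded as a bilinear map. -/
def bilin (γ : (Fin n → ℝ) [⋀^Fin 2]→ₗ[ℝ] ℝ) : (Fin n → ℝ) →ₗ[ℝ] (Fin n → ℝ) →ₗ[ℝ] ℝ :=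
  have update_one (z w : Fin n → ℝ) : Function.update ![z, 0] 1 w = ![z, w] := by
    ext i
    fin_cases i <;> rfl
  LinearMap.mk₂ ℝ (fun x y => γ ![x, y])
    (fun _ _ _ => γ.map_vecCons_add _ _ _)
    (fun _ _ _ => γ.map_vecCons_smul _ _ _)
    (fun z x y => by simpa only [update_one] using γ.map_update_add ![z, 0] 1 x y)
    (fun c z x => by simpa only [update_one] using γ.map_update_smul ![z, 0] 1 c x)

lemma bilin_apply (γ : (Fin n → ℝ) [⋀^Fin 2]→ₗ[ℝ] ℝ) (x y : Fin n → ℝ) :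
    bilin γ x y = γ ![x, y] := rfl

/-- The trilinear expression `A(v₀,v₁) B(v₂,v₃) C(v₄,v₅)`, whose antisymmetrization is the wedge
product of the 2-forms `A`, `B`, `C` up to a factor. -/
def mulTwoForms (A B C : (Fin n → ℝ) [⋀^Fin 2]→ₗ[ℝ] ℝ) :
    MultilinearMap ℝ (fun _ : Fin 6 => Fin n → ℝ) ℝ where
  toFun v := bilin A (v 0) (v 1) * bilin B (v 2) (v 3) * bilin C (v 4) (v 5)
  map_update_add' := by
    intro inst v i x y
    obtain rfl : inst = instDecidableEqFin 6 := Subsingleton.elim _ _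
    fin_cases i <;> simp <;> ring
  map_update_smul' := by
    intro inst v i c x
    obtain rfl : inst = instDecidableEqFin 6 := Subsingleton.elim _ _
    fin_cases i <;> simp <;> ring

/-- The wedge product `A ∧ B ∧ C` of three 2-forms on `ℝⁿ`, in the determinant convention. -/
def wedge (A B C : (Fin n → ℝ) [⋀^Fin 2]→ₗ[ℝ] ℝ) : (Fin n → ℝ) [⋀^Fin 6]→ₗ[ℝ] ℝ :=
  (1 / 8 : ℝ) • MultilinearMap.alternatization (mulTwoForms A B C)

lemma wedge_apply (A B C : (Fin n → ℝ) [⋀^Fin 2]→ₗ[ℝ] ℝ) (v : Fin 6 → Fin n → ℝ) :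
    wedge A B C v = (1 / 8 : ℝ) * ∑ σ : Equiv.Perm (Fin 6), ((Equiv.Perm.sign σ : ℤ) : ℝ) *
      (A ![v (σ 0), v (σ 1)] * B ![v (σ 2), v (σ 3)] * C ![v (σ 4), v (σ 5)]) := by
  simp [wedge, MultilinearMap.alternatization_apply, mulTwoForms, bilin_apply, Units.smul_def]

lemma wedge_pullback (M : Matrix (Fin n) (Fin n) ℝ) (A B C : (Fin n → ℝ) [⋀^Fin 2]→ₗ[ℝ] ℝ) :
    wedge (pullback M A) (pullback M B) (pullback M C) = pullback M (wedge A B C) := by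
  ext v
  rw [pullback_apply]
  simp only [wedge_apply, pullback_apply_pair]

lemma normSqCube_eq_normSq (γ : (Fin 7 → ℝ) [⋀^Fin 2]→ₗ[ℝ] ℝ) :
    normSqCube γ = normSq (wedge γ γ γ) := by
  have hwedge (v : Fin 6 → Fin 7 → ℝ) :
      wedge222 (fun x y => γ ![x, y]) (fun x y => γ ![x, y]) (fun x y => γ ![x, y]) v =
        wedge γ γ γ v := (wedge_apply γ γ γ v).symm
  simp only [normSqCube, normSq, hwedge, e_eq_single, Finset.sum_filter, sum_fin_succ_arrow,
    basisTuple_vecCons, basisTuple_empty, strictMono_vecCons, Matrix.cons_val_zero,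
    sum_fin_zero_arrow, strictMono_fin_zero_add_one, and_true]

end AlternatingForms

section WeightForms

/-- The 2-form `e^p ∧ e^q` on `ℝⁿ`. -/
def basisForm {n : ℕ} (p q : Fin n) : (Fin n → ℝ) [⋀^Fin 2]→ₗ[ℝ] ℝ :=
  Matrix.detRowAlternating.compLinearMap (LinearMap.funLeft ℝ ℝ ![p, q])

lemma basisForm_apply {n : ℕ} (p q : Fin n) (x y : Fin n → ℝ) :
    basisForm p q ![x, y] = x p * y q - x q * y p := by
  rw [basisForm, AlternatingMap.compLinearMap_apply]
  exact Matrix.det_fin_two _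

/-- The 2-form `l e^{23} + m e^{45} + n e^{67}` (here `e¹` is indexed by `0`). For `l + m + n = 0`
these forms are the elements of the maximal torus of `𝔤₂ ≅ Λ²₁₄` singled out by `e₁`. -/
def weightForm (l m n : ℝ) : (Fin 7 → ℝ) [⋀^Fin 2]→ₗ[ℝ] ℝ :=
  l • basisForm 1 2 + m • basisForm 3 4 + n • basisForm 5 6

lemma weightForm_apply (l m n : ℝ) (x y : Fin 7 → ℝ) :
    weightForm l m n ![x, y] =
      l * (x 1 * y 2 - x 2 * y 1) + m * (x 3 * y 4 - x 4 * y 3) + n * (x 5 * y 6 - x 6 * y 5) := by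
  simp only [weightForm, AlternatingMap.add_apply, AlternatingMap.smul_apply, basisForm_apply,
    smul_eq_mul]

lemma normSq_weightForm (l m n : ℝ) : normSq (weightForm l m n) = l ^ 2 + m ^ 2 + n ^ 2 := by
  rw [← normSq2_eq_normSq, normSq2]
  simp [weightForm_apply, Fin.sum_univ_seven, e]

lemma weightForm_eq_pullback (l m n : ℝ) :
    weightForm l m n = pullback (Matrix.diagonal ![0, l, 1, m, 1, n, 1]) (weightForm 1 1 1) := by
  refine twoForm_ext fun x y => ?_
  rw [pullback_apply_pair, weightForm_apply, weightForm_apply]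
  simp [Matrix.mulVec_diagonal]
  ring

/-- The standard symplectic matrix on `ℤ⁶`, pairing each even index with its successor. -/
def symplecticMatrix (i j : Fin 6) : ℤ :=
  if i.val / 2 = j.val / 2 then (j : ℤ) - i else 0

lemma weightForm_one_apply_basisTuple_succ (i j : Fin 6) :
    weightForm 1 1 1 ![basisTuple Fin.succ i, basisTuple Fin.succ j] = symplecticMatrix i j := by
  rw [weightForm_apply]
  fin_cases i <;> fin_cases j <;> simp [symplecticMatrix, basisTuple, Fin.ext_iff]

set_option maxRecDepth 10000 in
lemma sum_sign_mul_symplecticMatrix :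
    ∑ σ : Equiv.Perm (Fin 6), (Equiv.Perm.sign σ : ℤ) * (symplecticMatrix (σ 0) (σ 1) *
      symplecticMatrix (σ 2) (σ 3) * symplecticMatrix (σ 4) (σ 5)) = 48 := by
  -- Not evaluating the sign in the terms that vanish keeps the kernel computation short.
  have h (σ : Equiv.Perm (Fin 6)) (t : ℤ) :
      Equiv.Perm.sign σ * t = if t = 0 then 0 else Equiv.Perm.sign σ * t := by
    split_ifs with ht <;> simp [ht]
  rw [Finset.sum_congr rfl fun σ _ => h σ _]
  decide +kernel

lemma wedge_weightForm_one_apply_succ :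
    wedge (weightForm 1 1 1) (weightForm 1 1 1) (weightForm 1 1 1) (basisTuple Fin.succ) = 6 := by
  simp only [wedge_apply, weightForm_one_apply_basisTuple_succ]
  have h := congrArg (Int.cast (R := ℝ)) sum_sign_mul_symplecticMatrix
  push_cast at h
  rw [h]
  norm_num

lemma eq_succ_of_strictMono_of_ne_zero {k : ℕ} {a : Fin k → Fin (k + 1)} (ha : StrictMono a)
    (h0 : ∀ i, a i ≠ 0) : a = Fin.succ := by
  have hcard : ({0}ᶜ : Finset (Fin (k + 1))).card = k := by simp [Finset.card_compl]
  rw [Finset.orderEmbOfFin_unique hcard (fun i => by simpa using h0 i) ha,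
    Finset.orderEmbOfFin_unique hcard (fun i => by simp) Fin.strictMono_succ]

lemma normSq_wedge_weightForm (l m n : ℝ) :
    normSq (wedge (weightForm l m n) (weightForm l m n) (weightForm l m n)) =
      36 * (l * m * n) ^ 2 := by
  rw [weightForm_eq_pullback, wedge_pullback, normSq, Finset.sum_eq_single Fin.succ]
  · rw [pullback_diagonal_apply_single, wedge_weightForm_one_apply_succ]
    simp [Fin.prod_univ_succ]
    ring
  · intro a ha hne
    obtain ⟨i, hi⟩ : ∃ i, a i = 0 := by
      by_contra! h0
      exact hne (eq_succ_of_strictMono_of_ne_zero (by simpa using ha) h0)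
    rw [pullback_diagonal_apply_single, Finset.prod_eq_zero (Finset.mem_univ i) (by simp [hi]),
      zero_mul, zero_pow two_ne_zero]
  · simp [Fin.strictMono_succ]

end WeightForms

/-- The octonionic cross product on `ℝ⁷`, defined by `⟨x × y, z⟩ = φ(x, y, z)`. -/
def cross : (Fin 7 → ℝ) →ₗ[ℝ] (Fin 7 → ℝ) →ₗ[ℝ] (Fin 7 → ℝ) :=
  LinearMap.mk₂ ℝ (fun x y i => phi x y (e i))
    (fun x x' y => by ext i; simp only [phi, w3, Pi.add_apply]; ring)
    (fun c x y => by ext i; simp only [phi, w3, Pi.smul_apply, smul_eq_mul]; ring)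
    (fun x y y' => by ext i; simp only [phi, w3, Pi.add_apply]; ring)
    (fun c x y => by ext i; simp only [phi, w3, Pi.smul_apply, smul_eq_mul]; ring)

local notation:74 x:74 "×₇" y:75 => cross x y

section CrossProduct

lemma cross_eq (x y : Fin 7 → ℝ) : x ×₇ y =
    ![x 1 * y 2 - x 2 * y 1 + (x 3 * y 4 - x 4 * y 3) + (x 5 * y 6 - x 6 * y 5),
      x 2 * y 0 - x 0 * y 2 + (x 3 * y 5 - x 5 * y 3) - (x 4 * y 6 - x 6 * y 4),
      x 0 * y 1 - x 1 * y 0 - (x 3 * y 6 - x 6 * y 3) - (x 4 * y 5 - x 5 * y 4),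
      x 4 * y 0 - x 0 * y 4 + (x 5 * y 1 - x 1 * y 5) - (x 6 * y 2 - x 2 * y 6),
      x 0 * y 3 - x 3 * y 0 - (x 6 * y 1 - x 1 * y 6) - (x 5 * y 2 - x 2 * y 5),
      x 6 * y 0 - x 0 * y 6 + (x 1 * y 3 - x 3 * y 1) - (x 2 * y 4 - x 4 * y 2),
      x 0 * y 5 - x 5 * y 0 - (x 1 * y 4 - x 4 * y 1) - (x 2 * y 3 - x 3 * y 2)] := by
  ext i
  fin_cases i <;> simp [cross, phi, w3, e] <;> ring

lemma cross_dotProduct (x y z : Fin 7 → ℝ) : x ×₇ y ⬝ᵥ z = phi x y z := by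
  simp only [cross_eq, dotProduct, Fin.sum_univ_seven, phi, w3]
  simp
  ring

lemma cross_anticomm (x y : Fin 7 → ℝ) : y ×₇ x = -(x ×₇ y) := by
  ext i
  fin_cases i <;> simp [cross_eq] <;> ring

lemma cross_self (x : Fin 7 → ℝ) : x ×₇ x = 0 := by
  ext i
  fin_cases i <;> simp [cross_eq] <;> ring

lemma cross_dotProduct_eq_dotProduct_cross (x y z : Fin 7 → ℝ) :
    x ×₇ y ⬝ᵥ z = x ⬝ᵥ y ×₇ z := by
  rw [dotProduct_comm x, cross_dotProduct, cross_dotProduct]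
  simp only [phi, w3]
  ring

lemma cross_cross_self (x y : Fin 7 → ℝ) : x ×₇ (x ×₇ y) = (x ⬝ᵥ y) • x - (x ⬝ᵥ x) • y := by
  ext i
  fin_cases i <;> simp [cross_eq, dotProduct, Fin.sum_univ_seven] <;> ring

lemma cross_cross_add_cross_cross (x y z : Fin 7 → ℝ) :
    x ×₇ (y ×₇ z) + y ×₇ (x ×₇ z) = (x ⬝ᵥ z) • y + (y ⬝ᵥ z) • x - (2 * x ⬝ᵥ y) • z := by
  have h := cross_cross_self (x + y) z
  simp only [map_add, LinearMap.add_apply, add_dotProduct, dotProduct_add, cross_cross_self,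
    dotProduct_comm y x] at h
  linear_combination (norm := module) h

lemma cross_cross_cross_eq (u v x y : Fin 7 → ℝ) :
    u ×₇ v ×₇ (x ×₇ y) = (u ×₇ v ⬝ᵥ y) • x - (u ×₇ v ⬝ᵥ x) • y - (x ×₇ y ⬝ᵥ v) • u +
      (x ×₇ y ⬝ᵥ u) • v + (v ⬝ᵥ x) • u ×₇ y - (u ⬝ᵥ x) • v ×₇ y + (v ⬝ᵥ y) • x ×₇ u -
      (u ⬝ᵥ y) • x ×₇ v := by
  have hflip (u v p : Fin 7 → ℝ) : u ×₇ v ×₇ p + u ×₇ (v ×₇ p) =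
      (2 * u ⬝ᵥ p) • v - (v ⬝ᵥ p) • u - (u ⬝ᵥ v) • p := by
    have h := cross_cross_add_cross_cross p u v
    rw [cross_anticomm (u ×₇ v), cross_anticomm v p, map_neg, dotProduct_comm p,
      dotProduct_comm p] at h
    linear_combination (norm := module) -h
  -- Reassociating `(u × v) × (x × y)` through nested products leads to `(x × y) × (u × v)`, its
  -- negative, so that the claim is half of the lower order terms picked up on the way.
  have huv := hflip u v (x ×₇ y)
  have hxy := hflip x y (u ×₇ v)
  have h₁ := congrArg (cross u) (cross_cross_add_cross_cross v x y)
  have h₂ := cross_cross_add_cross_cross u x (v ×₇ y)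
  have h₃ := congrArg (cross x) (cross_cross_add_cross_cross u v y)
  have h₄ := congrArg (cross x) (cross_cross_add_cross_cross v y u)
  have huvy : u ⬝ᵥ v ×₇ y = u ×₇ v ⬝ᵥ y := (cross_dotProduct_eq_dotProduct_cross u v y).symm
  have hxvy : x ⬝ᵥ v ×₇ y = -(x ×₇ y ⬝ᵥ v) := by
    rw [cross_dotProduct_eq_dotProduct_cross, cross_anticomm v y, dotProduct_neg, neg_neg]
  simp only [map_add, map_sub, map_smul, map_neg, cross_anticomm u v, cross_anticomm u y,
    cross_anticomm x u, cross_anticomm (u ×₇ v), dotProduct_comm _ (u ×₇ v),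
    dotProduct_comm _ (x ×₇ y), huvy, hxvy, dotProduct_comm v u, dotProduct_comm y u]
    at huv hxy h₁ h₂ h₃ h₄
  linear_combination (norm := module) (1 / 2 : ℝ) • (huv - hxy - h₁ + h₂ - h₃ - h₄)

end CrossProduct

section Stabilizer

/-- The matrix of the linear map `y ↦ x × y`. -/
def crossMatrix (x : Fin 7 → ℝ) : Matrix (Fin 7) (Fin 7) ℝ := LinearMap.toMatrix' (cross x)

lemma crossMatrix_mulVec (x y : Fin 7 → ℝ) : crossMatrix x *ᵥ y = x ×₇ y :=
  LinearMap.toMatrix'_mulVec _ _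

lemma crossMatrix_transpose (x : Fin 7 → ℝ) : (crossMatrix x)ᵀ = -crossMatrix x := by
  refine matrix_ext_dotProduct_mulVec fun y z => ?_
  rw [← mulVec_dotProduct, Matrix.neg_mulVec, crossMatrix_mulVec,
    crossMatrix_mulVec, cross_anticomm, neg_dotProduct, dotProduct_neg,
    cross_dotProduct_eq_dotProduct_cross]

lemma crossMatrix_mul_self (x : Fin 7 → ℝ) :
    crossMatrix x * crossMatrix x = Matrix.vecMulVec x x - (x ⬝ᵥ x) • 1 := by
  refine Matrix.ext_of_mulVec_single fun j => ?_
  simp only [← Matrix.mulVec_mulVec, crossMatrix_mulVec, cross_cross_self, Matrix.sub_mulVec,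
    Matrix.vecMulVec_mulVec, Matrix.smul_mulVec, Matrix.one_mulVec, op_smul_eq_smul]

lemma crossMatrix_mul_vecMulVec (x y : Fin 7 → ℝ) : crossMatrix x * Matrix.vecMulVec x y = 0 := by
  rw [Matrix.mul_vecMulVec, crossMatrix_mulVec, cross_self, Matrix.zero_vecMulVec]

lemma vecMulVec_mul_crossMatrix (x y : Fin 7 → ℝ) : Matrix.vecMulVec y x * crossMatrix x = 0 := by
  rw [Matrix.vecMulVec_mul, ← Matrix.mulVec_transpose, crossMatrix_transpose, Matrix.neg_mulVec,
    crossMatrix_mulVec, cross_self, neg_zero, Matrix.vecMulVec_zero]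

lemma det_crossMatrix_add_vecMulVec_sq {x : Fin 7 → ℝ} (hx : x ≠ 0) (t : ℝ) :
    (crossMatrix x + t • Matrix.vecMulVec x x).det ^ 2 = t ^ 2 * (x ⬝ᵥ x) ^ 8 := by
  set r := x ⬝ᵥ x with hr
  have hr0 : r ≠ 0 := fun h => hx (dotProduct_self_eq_zero.mp h)
  have hmul : (crossMatrix x + t • Matrix.vecMulVec x x) *
      (crossMatrix x + t • Matrix.vecMulVec x x)ᵀ =
      r • 1 + Matrix.vecMulVec ((t ^ 2 * r - 1) • x) x := by
    simp only [Matrix.transpose_add, Matrix.transpose_smul, crossMatrix_transpose,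
      Matrix.transpose_vecMulVec, Matrix.add_mul, Matrix.mul_add, Matrix.mul_neg, Matrix.smul_mul,
      Matrix.mul_smul, crossMatrix_mul_self, crossMatrix_mul_vecMulVec, vecMulVec_mul_crossMatrix,
      Matrix.vecMulVec_mul_vecMulVec, ← hr, Matrix.vecMulVec_smul, Matrix.smul_vecMulVec]
    module
  calc (crossMatrix x + t • Matrix.vecMulVec x x).det ^ 2
      = (r • 1 + Matrix.vecMulVec ((t ^ 2 * r - 1) • x) x).det := by
        rw [← hmul, Matrix.det_mul, Matrix.det_transpose, sq]
    _ = t ^ 2 * r ^ 8 := by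
        rw [det_smul_one_add_vecMulVec hr0, dotProduct_smul, ← hr, Fintype.card_fin, smul_eq_mul]
        field_simp
        ring

/-- The stabilizer of `φ` in `GL(7, ℝ)`, i.e. the compact group `G₂`. -/
def phiStabilizer : Subgroup (GL (Fin 7) ℝ) where
  carrier := {g | ∀ x y z, phi (g.1 *ᵥ x) (g.1 *ᵥ y) (g.1 *ᵥ z) = phi x y z}
  mul_mem' {g h} hg hh x y z := by
    simp only [Units.val_mul, ← Matrix.mulVec_mulVec, hg _ _ _, hh _ _ _]
  one_mem' x y z := by simp only [Units.val_one, Matrix.one_mulVec]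
  inv_mem' {g} hg x y z := by
    rw [← hg]
    simp only [Matrix.mulVec_mulVec, ← Units.val_mul, mul_inv_cancel, Units.val_one,
      Matrix.one_mulVec]

lemma transpose_mul_crossMatrix_mulVec_mul {g : GL (Fin 7) ℝ} (hg : g ∈ phiStabilizer)
    (x : Fin 7 → ℝ) : g.1ᵀ * crossMatrix (g.1 *ᵥ x) * g.1 = crossMatrix x := by
  refine matrix_ext_dotProduct_mulVec fun y z => ?_
  rw [Matrix.mul_assoc, ← Matrix.mulVec_mulVec, ← Matrix.mulVec_mulVec, crossMatrix_mulVec,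
    crossMatrix_mulVec, ← mulVec_dotProduct,
    ← cross_dotProduct_eq_dotProduct_cross, ← cross_dotProduct_eq_dotProduct_cross,
    cross_dotProduct, cross_dotProduct, hg]

lemma eigenvalue_transpose_mul_self_eq_inv_abs_det {g : GL (Fin 7) ℝ} (hg : g ∈ phiStabilizer)
    {x : Fin 7 → ℝ} (hx : x ≠ 0) {μ : ℝ} (h : (g.1ᵀ * g.1) *ᵥ x = μ • x) :
    μ = |g.1.det|⁻¹ := by
  set u := g.1 *ᵥ x with hu
  have hgu : g.1ᵀ *ᵥ u = μ • x := by rw [← h, hu, Matrix.mulVec_mulVec]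
  have hu0 : u ≠ 0 := fun h0 => hx <|
    Matrix.mulVec_injective_iff_isUnit.mpr g.isUnit (h0.trans (Matrix.mulVec_zero _).symm)
  have huu : u ⬝ᵥ u = μ * (x ⬝ᵥ x) := by
    rw [← smul_eq_mul, ← dotProduct_smul, ← hgu, hu, mulVec_dotProduct]
  have hxx := dotProduct_self_pos hx
  have hμ : 0 < μ := pos_of_mul_pos_left (huu ▸ dotProduct_self_pos hu0) hxx.le
  -- Cross product matrices are singular; the rank one terms make their determinants informative.
  have hconj : g.1ᵀ * (crossMatrix u + (1 : ℝ) • Matrix.vecMulVec u u) * g.1 =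
      crossMatrix x + μ ^ 2 • Matrix.vecMulVec x x := by
    rw [Matrix.mul_add, Matrix.add_mul, transpose_mul_crossMatrix_mulVec_mul hg, one_smul,
      Matrix.mul_vecMulVec, Matrix.vecMulVec_mul, ← Matrix.mulVec_transpose, hgu,
      Matrix.smul_vecMulVec, Matrix.vecMulVec_smul, smul_smul, sq]
  have hdet := congrArg (fun M => M.det ^ 2) hconj
  simp only [Matrix.det_mul, Matrix.det_transpose, mul_pow,
    det_crossMatrix_add_vecMulVec_sq hu0, det_crossMatrix_add_vecMulVec_sq hx, huu] at hdet
  have hpow : (|g.1.det| * μ) ^ 4 = 1 := by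
    have hne : (x ⬝ᵥ x) ^ 8 * μ ^ 4 ≠ 0 := by positivity
    rw [mul_pow, Even.pow_abs (by decide)]
    refine mul_right_cancel₀ hne ?_
    linear_combination hdet
  exact eq_inv_of_mul_eq_one_right
    ((pow_eq_one_iff_of_nonneg (by positivity) (by norm_num)).mp hpow)

lemma transpose_mul_self_eq_one {g : GL (Fin 7) ℝ} (hg : g ∈ phiStabilizer) :
    g.1ᵀ * g.1 = 1 := by
  have hP : g.1ᵀ * g.1 = |g.1.det|⁻¹ • 1 :=
    eq_smul_one_of_forall_eigenvalue_eq (Matrix.isHermitian_conjTranspose_mul_self g.1)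
      fun x hx μ h => eigenvalue_transpose_mul_self_eq_inv_abs_det hg hx h
  have hdet := congrArg Matrix.det hP
  rw [Matrix.det_mul, Matrix.det_transpose, Matrix.det_smul, Matrix.det_one, mul_one,
    Fintype.card_fin, ← sq, ← sq_abs, inv_pow] at hdet
  have h0 : |g.1.det| ≠ 0 :=
    abs_ne_zero.mpr ((Matrix.isUnit_iff_isUnit_det _).mp g.isUnit).ne_zero
  have h9 : |g.1.det| ^ 9 = 1 := by
    field_simp at hdet
    rw [← hdet]
  rw [hP, (pow_eq_one_iff_of_nonneg (abs_nonneg _) (by norm_num)).mp h9, inv_one, one_smul]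

lemma normSq2_pullback {g : GL (Fin 7) ℝ} (hg : g ∈ phiStabilizer)
    (γ : (Fin 7 → ℝ) [⋀^Fin 2]→ₗ[ℝ] ℝ) : normSq2 (pullback g.1 γ) = normSq2 γ := by
  have hg' := mul_eq_one_comm.mp (transpose_mul_self_eq_one hg)
  rw [normSq2_eq_normSq, normSq2_eq_normSq, normSq_pullback _ hg']

lemma normSqCube_pullback {g : GL (Fin 7) ℝ} (hg : g ∈ phiStabilizer)
    (γ : (Fin 7 → ℝ) [⋀^Fin 2]→ₗ[ℝ] ℝ) : normSqCube (pullback g.1 γ) = normSqCube γ := by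
  have hg' := mul_eq_one_comm.mp (transpose_mul_self_eq_one hg)
  rw [normSqCube_eq_normSq, normSqCube_eq_normSq, wedge_pullback, normSq_pullback _ hg']

lemma exists_pullback_eq_of_pullback_eq {α β γ : (Fin 7 → ℝ) [⋀^Fin 2]→ₗ[ℝ] ℝ}
    (hα : ∃ g ∈ phiStabilizer, pullback g.1 α = γ)
    (hβ : ∃ g ∈ phiStabilizer, pullback g.1 β = γ) :
    ∃ g ∈ phiStabilizer, pullback g.1 α = β := by
  obtain ⟨g, hg, rfl⟩ := hα
  obtain ⟨h, hh, hhg⟩ := hβ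
  refine ⟨g * h⁻¹, mul_mem hg (inv_mem hh), ?_⟩
  rw [Units.val_mul, ← pullback_pullback, ← hhg, pullback_pullback, ← Units.val_mul,
    mul_inv_cancel, Units.val_one, pullback_one]

end Stabilizer

section AdaptedFrames

/-- An orthonormal triple with `c ⊥ a × b`: exactly the triples obtained from `(e₁, e₂, e₄)` by an
automorphism of the cross product. -/
structure IsAdaptedTriple (a b c : Fin 7 → ℝ) : Prop where
  norm_fst : a ⬝ᵥ a = 1
  norm_snd : b ⬝ᵥ b = 1
  norm_thd : c ⬝ᵥ c = 1
  fst_snd : a ⬝ᵥ b = 0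
  fst_thd : a ⬝ᵥ c = 0
  snd_thd : b ⬝ᵥ c = 0
  cross_thd : a ×₇ b ⬝ᵥ c = 0

lemma dotProduct_cross_self_left (x y : Fin 7 → ℝ) : x ⬝ᵥ x ×₇ y = 0 := by
  rw [← cross_dotProduct_eq_dotProduct_cross, cross_self, zero_dotProduct]

lemma dotProduct_cross_self_right (x y : Fin 7 → ℝ) : x ⬝ᵥ y ×₇ x = 0 := by
  rw [cross_anticomm, dotProduct_neg, dotProduct_cross_self_left, neg_zero]

lemma eq_top_of_cross_mem (S : Submodule ℝ (Fin 7 → ℝ))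
    (hcross : ∀ x ∈ S, ∀ y ∈ S, cross x y ∈ S) (h₀ : e 0 ∈ S) (h₁ : e 1 ∈ S) (h₃ : e 3 ∈ S) :
    S = ⊤ := by
  have e₂ : e 0 ×₇ e 1 = e 2 := by ext i; fin_cases i <;> simp [cross_eq, e]
  have e₄ : e 0 ×₇ e 3 = e 4 := by ext i; fin_cases i <;> simp [cross_eq, e]
  have e₅ : e 1 ×₇ e 3 = e 5 := by ext i; fin_cases i <;> simp [cross_eq, e]
  have e₆ : e 0 ×₇ e 5 = e 6 := by ext i; fin_cases i <;> simp [cross_eq, e]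
  have h₅ : e 5 ∈ S := e₅ ▸ hcross _ h₁ _ h₃
  have hmem (i : Fin 7) : e i ∈ S := by
    fin_cases i
    exacts [h₀, h₁, e₂ ▸ hcross _ h₀ _ h₁, h₃, e₄ ▸ hcross _ h₀ _ h₃, h₅,
      e₆ ▸ hcross _ h₀ _ h₅]
  rw [eq_top_iff, ← (Pi.basisFun ℝ (Fin 7)).span_eq, Submodule.span_le]
  rintro _ ⟨i, rfl⟩
  rw [Pi.basisFun_apply, ← e_eq_single]
  exact hmem i

/-- The linear map sending `e₁, e₂, e₄` to `a, b, c` and their iterated cross products to those of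
`a, b, c`. -/
def frame (a b c : Fin 7 → ℝ) : (Fin 7 → ℝ) →ₗ[ℝ] (Fin 7 → ℝ) :=
  Fintype.linearCombination ℝ
    ![a, b, a ×₇ b, c, a ×₇ c, b ×₇ c, a ×₇ (b ×₇ c)]

lemma frame_apply (a b c x : Fin 7 → ℝ) : frame a b c x =
    x 0 • a + x 1 • b + x 2 • a ×₇ b + x 3 • c + x 4 • a ×₇ c + x 5 • b ×₇ c +
      x 6 • a ×₇ (b ×₇ c) := by
  simp [frame, Fintype.linearCombination_apply, Fin.sum_univ_seven]

namespace IsAdaptedTriple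

variable {a b c : Fin 7 → ℝ}

lemma swap (h : IsAdaptedTriple a b c) : IsAdaptedTriple b a c :=
  ⟨h.norm_snd, h.norm_fst, h.norm_thd, by rw [dotProduct_comm, h.fst_snd], h.snd_thd, h.fst_thd,
    by rw [cross_anticomm, neg_dotProduct, h.cross_thd, neg_zero]⟩

lemma rotate (h : IsAdaptedTriple a b c) : IsAdaptedTriple b c a :=
  ⟨h.norm_snd, h.norm_thd, h.norm_fst, h.snd_thd, by rw [dotProduct_comm, h.fst_snd],
    by rw [dotProduct_comm, h.fst_thd],
    by rw [dotProduct_comm, ← cross_dotProduct_eq_dotProduct_cross, h.cross_thd]⟩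

lemma cross_cross_snd (h : IsAdaptedTriple a b c) : a ×₇ (a ×₇ b) = -b := by
  rw [cross_cross_self, h.fst_snd, h.norm_fst, zero_smul, one_smul, zero_sub]

lemma cross_cross_thd (h : IsAdaptedTriple a b c) : a ×₇ (a ×₇ c) = -c :=
  h.rotate.rotate.swap.cross_cross_snd

lemma cross_cross_comm (h : IsAdaptedTriple a b c) : b ×₇ (a ×₇ c) = -(a ×₇ (b ×₇ c)) := by
  rw [eq_neg_iff_add_eq_zero, cross_cross_add_cross_cross, h.swap.fst_snd, h.fst_thd, h.snd_thd]
  simp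

lemma cross_cross_rotate (h : IsAdaptedTriple a b c) : c ×₇ (a ×₇ b) = a ×₇ (b ×₇ c) := by
  rw [cross_anticomm c b, map_neg, ← h.rotate.rotate.swap.cross_cross_comm]

lemma cross_cross_left (h : IsAdaptedTriple a b c) : b ×₇ (a ×₇ b) = a := by
  rw [cross_anticomm b a, map_neg, h.swap.cross_cross_snd, neg_neg]

lemma cross_cross_cross (h : IsAdaptedTriple a b c) : a ×₇ (a ×₇ (b ×₇ c)) = -(b ×₇ c) := by
  rw [cross_cross_self, ← cross_dotProduct_eq_dotProduct_cross, h.cross_thd, h.norm_fst]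
  simp

lemma neg_fst (h : IsAdaptedTriple a b c) : IsAdaptedTriple (-a) b c :=
  ⟨by rw [neg_dotProduct_neg, h.norm_fst], h.norm_snd, h.norm_thd,
    by rw [neg_dotProduct, h.fst_snd, neg_zero], by rw [neg_dotProduct, h.fst_thd, neg_zero],
    h.snd_thd, by rw [map_neg, LinearMap.neg_apply, neg_dotProduct, h.cross_thd, neg_zero]⟩

lemma cross_snd_thd (h : IsAdaptedTriple a b c) : IsAdaptedTriple a b (b ×₇ c) where
  norm_fst := h.norm_fst
  norm_snd := h.norm_snd
  norm_thd := by
    rw [cross_dotProduct_eq_dotProduct_cross, h.rotate.cross_cross_left, h.norm_snd]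
  fst_snd := h.fst_snd
  fst_thd := by rw [← cross_dotProduct_eq_dotProduct_cross, h.cross_thd]
  snd_thd := dotProduct_cross_self_left b c
  cross_thd := by
    rw [cross_dotProduct_eq_dotProduct_cross, h.rotate.cross_cross_snd, dotProduct_neg, h.fst_thd,
      neg_zero]

lemma frame_cross_fst (h : IsAdaptedTriple a b c) (x : Fin 7 → ℝ) :
    a ×₇ frame a b c x = frame a b c (e 0 ×₇ x) := by
  simp only [frame_apply, cross_eq (e 0), map_add, map_smul, cross_self, h.cross_cross_snd,
    h.cross_cross_thd, h.cross_cross_cross]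
  simp [e]
  module

lemma frame_cross_snd (h : IsAdaptedTriple a b c) (x : Fin 7 → ℝ) :
    b ×₇ frame a b c x = frame a b c (e 1 ×₇ x) := by
  have h₆ : b ×₇ (a ×₇ (b ×₇ c)) = a ×₇ c := by
    rw [← neg_eq_iff_eq_neg.mpr h.cross_cross_comm, map_neg, h.swap.cross_cross_cross, neg_neg]
  simp only [frame_apply, cross_eq (e 1), map_add, map_smul, cross_self, cross_anticomm a b,
    h.cross_cross_left, h.cross_cross_comm, h.swap.cross_cross_thd, h₆]
  simp [e]
  module

lemma frame_cross_thd (h : IsAdaptedTriple a b c) (x : Fin 7 → ℝ) :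
    c ×₇ frame a b c x = frame a b c (e 3 ×₇ x) := by
  have h₆ : c ×₇ (a ×₇ (b ×₇ c)) = -(a ×₇ b) := by
    rw [← h.cross_cross_rotate, h.rotate.rotate.cross_cross_cross]
  simp only [frame_apply, cross_eq (e 3), map_add, map_smul, cross_self, cross_anticomm a c,
    cross_anticomm b c, h.rotate.rotate.swap.cross_cross_left, h.rotate.cross_cross_left,
    h.cross_cross_rotate, h₆]
  simp [e]
  module

lemma dotProduct_frame_fst (h : IsAdaptedTriple a b c) (x : Fin 7 → ℝ) :
    a ⬝ᵥ frame a b c x = x 0 := by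
  have h₅ : a ⬝ᵥ b ×₇ c = 0 := by rw [← cross_dotProduct_eq_dotProduct_cross, h.cross_thd]
  simp [frame_apply, dotProduct_add, h.norm_fst, h.fst_snd, h.fst_thd, h₅,
    dotProduct_cross_self_left]

lemma dotProduct_frame_snd (h : IsAdaptedTriple a b c) (x : Fin 7 → ℝ) :
    b ⬝ᵥ frame a b c x = x 1 := by
  have h₄ : b ⬝ᵥ a ×₇ c = 0 := by rw [← cross_dotProduct_eq_dotProduct_cross, h.swap.cross_thd]
  have h₆ : b ⬝ᵥ a ×₇ (b ×₇ c) = 0 := by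
    rw [← neg_eq_iff_eq_neg.mpr h.cross_cross_comm, dotProduct_neg, dotProduct_cross_self_left,
      neg_zero]
  simp [frame_apply, dotProduct_add, h.norm_snd, h.swap.fst_snd, h.snd_thd, h₄, h₆,
    dotProduct_cross_self_left, dotProduct_cross_self_right]

lemma dotProduct_frame_thd (h : IsAdaptedTriple a b c) (x : Fin 7 → ℝ) :
    c ⬝ᵥ frame a b c x = x 3 := by
  have h₂ : c ⬝ᵥ a ×₇ b = 0 := by rw [dotProduct_comm, h.cross_thd]
  have h₆ : c ⬝ᵥ a ×₇ (b ×₇ c) = 0 := by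
    rw [cross_anticomm c b, map_neg, ← h.rotate.rotate.swap.cross_cross_comm,
      dotProduct_cross_self_left]
  simp [frame_apply, dotProduct_add, h.norm_thd, h.rotate.rotate.fst_snd,
    h.rotate.rotate.fst_thd, h₂, h₆, dotProduct_cross_self_right]

/-- The vectors `x` such that `F` preserves both products `x × y` and `⟨x, y⟩` for all `y`. -/
def preservedVectors (F : (Fin 7 → ℝ) →ₗ[ℝ] (Fin 7 → ℝ)) : Submodule ℝ (Fin 7 → ℝ) where
  carrier := {x | ∀ y, F x ×₇ F y = F (x ×₇ y) ∧ F x ⬝ᵥ F y = x ⬝ᵥ y}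
  add_mem' hx hx' y := by simp [hx y, hx' y, add_dotProduct]
  zero_mem' y := by simp
  smul_mem' r x hx y := by simp [hx y]

lemma cross_mem_preservedVectors {F : (Fin 7 → ℝ) →ₗ[ℝ] (Fin 7 → ℝ)} {x y : Fin 7 → ℝ}
    (hx : x ∈ preservedVectors F) (hy : y ∈ preservedVectors F) :
    x ×₇ y ∈ preservedVectors F := by
  intro z
  constructor
  · have hexpand (u v w : Fin 7 → ℝ) : u ×₇ v ×₇ w =
        -((u ⬝ᵥ v) • w + (v ⬝ᵥ w) • u - (2 * u ⬝ᵥ w) • v - u ×₇ (w ×₇ v)) := by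
      rw [cross_anticomm w, dotProduct_comm v, ← cross_cross_add_cross_cross]
      abel
    rw [← (hx y).1, hexpand, hexpand, cross_anticomm (F y), (hy z).1, map_neg, (hx _).1,
      (hx y).2, (hx z).2, (hy z).2, cross_anticomm y z]
    simp only [map_add, map_sub, map_neg, map_smul]
  · rw [← (hx y).1, cross_dotProduct_eq_dotProduct_cross, (hy z).1, (hx _).2,
      cross_dotProduct_eq_dotProduct_cross]

lemma preservedVectors_frame (h : IsAdaptedTriple a b c) :
    preservedVectors (frame a b c) = ⊤ := by
  refine eq_top_of_cross_mem _ (fun x hx y hy => cross_mem_preservedVectors hx hy)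
    (fun y => ?_) (fun y => ?_) (fun y => ?_)
  · have h₀ : frame a b c (e 0) = a := by simp [frame_apply, e]
    rw [h₀, h.frame_cross_fst, h.dotProduct_frame_fst]
    simp [e_eq_single]
  · have h₁ : frame a b c (e 1) = b := by simp [frame_apply, e]
    rw [h₁, h.frame_cross_snd, h.dotProduct_frame_snd]
    simp [e_eq_single]
  · have h₃ : frame a b c (e 3) = c := by simp [frame_apply, e]
    rw [h₃, h.frame_cross_thd, h.dotProduct_frame_thd]
    simp [e_eq_single]

lemma exists_mem_phiStabilizer (h : IsAdaptedTriple a b c) :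
    ∃ g ∈ phiStabilizer, ∀ x, g.1 *ᵥ x = frame a b c x := by
  have hF (x y : Fin 7 → ℝ) := (preservedVectors_frame h ▸ Submodule.mem_top :
    x ∈ preservedVectors (frame a b c)) y
  set M := LinearMap.toMatrix' (frame a b c)
  have hmul (x : Fin 7 → ℝ) : M *ᵥ x = frame a b c x := LinearMap.toMatrix'_mulVec _ _
  have hMM : Mᵀ * M = 1 := matrix_ext_dotProduct_mulVec fun x y => by
    rw [← Matrix.mulVec_mulVec, ← mulVec_dotProduct, hmul, hmul, (hF x y).2, Matrix.one_mulVec]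
  refine ⟨⟨M, Mᵀ, mul_eq_one_comm.mp hMM, hMM⟩, fun x y z => ?_, hmul⟩
  simp only [hmul, ← cross_dotProduct, (hF _ _).1, (hF _ _).2]

end IsAdaptedTriple

end AdaptedFrames

section Derivations

/-- The skew matrix `A` of a 2-form `γ` on `ℝⁿ`, with the convention `γ(x, y) = ⟨A x, y⟩`. -/
def formMatrix {n : ℕ} (γ : (Fin n → ℝ) [⋀^Fin 2]→ₗ[ℝ] ℝ) : Matrix (Fin n) (Fin n) ℝ :=
  (LinearMap.toMatrix₂' ℝ (bilin γ))ᵀ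

lemma formMatrix_mulVec_dotProduct {n : ℕ} (γ : (Fin n → ℝ) [⋀^Fin 2]→ₗ[ℝ] ℝ)
    (x y : Fin n → ℝ) : formMatrix γ *ᵥ x ⬝ᵥ y = γ ![x, y] := by
  rw [mulVec_dotProduct, formMatrix, Matrix.transpose_transpose, ← Matrix.toLinearMap₂'_apply',
    Matrix.toLinearMap₂'_toMatrix', bilin_apply]

lemma formMatrix_apply (γ : (Fin 7 → ℝ) [⋀^Fin 2]→ₗ[ℝ] ℝ) (i j : Fin 7) :
    formMatrix γ i j = γ ![e j, e i] := by
  rw [formMatrix, Matrix.transpose_apply, LinearMap.toMatrix₂'_apply, bilin_apply, e_eq_single,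
    e_eq_single]

lemma formMatrix_transpose {n : ℕ} (γ : (Fin n → ℝ) [⋀^Fin 2]→ₗ[ℝ] ℝ) :
    (formMatrix γ)ᵀ = -formMatrix γ := by
  refine matrix_ext_dotProduct_mulVec fun x y => ?_
  rw [← mulVec_dotProduct, Matrix.neg_mulVec, dotProduct_neg, dotProduct_comm x,
    formMatrix_mulVec_dotProduct, formMatrix_mulVec_dotProduct]
  rw [← γ.map_swap ![y, x] (show (0 : Fin 2) ≠ 1 by decide)]
  congr 1
  ext i
  fin_cases i <;> rfl

lemma angle_formMatrix (γ : (Fin 7 → ℝ) [⋀^Fin 2]→ₗ[ℝ] ℝ) (i : Fin 7) :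
    angle (formMatrix γ) i = -∑ j, ∑ k, eps i j k * γ ![e j, e k] := by
  simp only [← formMatrix_apply, angle, ← Finset.sum_neg_distrib, ← mul_neg]
  have h (j k : Fin 7) : formMatrix γ j k = -formMatrix γ k j :=
    congrFun₂ (formMatrix_transpose γ) k j
  simp only [← h]

lemma angle_eq_sum_cross (A : Matrix (Fin 7) (Fin 7) ℝ) : angle A = ∑ j, e j ×₇ A j := by
  ext i
  simp only [angle, eps, ← cross_dotProduct, Finset.sum_apply]
  refine Finset.sum_congr rfl fun j _ => ?_
  have h : e i ⬝ᵥ e j ×₇ A j = (e j ×₇ A j) i := by simp [e_eq_single]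
  rw [← h, ← cross_dotProduct_eq_dotProduct_cross, dotProduct]
  simp [e_eq_single]

/-- A skew matrix that is a derivation of the cross product, i.e. an element of the Lie algebra
`𝔤₂` of the stabilizer of `φ`. -/
structure IsCrossDerivation (A : Matrix (Fin 7) (Fin 7) ℝ) : Prop where
  transpose_eq_neg : Aᵀ = -A
  mulVec_cross (x y : Fin 7 → ℝ) : A *ᵥ (x ×₇ y) = (A *ᵥ x) ×₇ y + x ×₇ (A *ᵥ y)

lemma mulVec_cross_sub {A : Matrix (Fin 7) (Fin 7) ℝ} (hA : Aᵀ = -A) (x y : Fin 7 → ℝ) :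
    A *ᵥ (x ×₇ y) - (A *ᵥ x) ×₇ y - x ×₇ (A *ᵥ y) = -(1 / 2 : ℝ) •
      (angle A ×₇ (x ×₇ y) + (angle A ⬝ᵥ x) • y - (angle A ⬝ᵥ y) • x) := by
  simp only [mulVec_eq_sum_of_transpose_eq_neg hA, ← e_eq_single, angle_eq_sum_cross, map_smul,
    map_sum, LinearMap.smul_apply, LinearMap.sum_apply, sum_dotProduct, Finset.sum_smul, neg_smul,
    ← Finset.sum_sub_distrib, ← Finset.sum_add_distrib, ← smul_sub, ← smul_neg,
    ← Finset.sum_neg_distrib]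
  refine congrArg _ (Finset.sum_congr rfl fun j _ => ?_)
  simp only [cross_cross_cross_eq, map_sub, map_smul, LinearMap.sub_apply, LinearMap.smul_apply,
    dotProduct_comm (x ×₇ y)]
  module

lemma isCrossDerivation_formMatrix {γ : (Fin 7 → ℝ) [⋀^Fin 2]→ₗ[ℝ] ℝ}
    (hγ : ∀ i, ∑ j, ∑ k, eps i j k * γ ![e j, e k] = 0) :
    IsCrossDerivation (formMatrix γ) := by
  refine ⟨formMatrix_transpose γ, fun x y => ?_⟩
  have hangle : angle (formMatrix γ) = 0 := by
    ext i
    rw [angle_formMatrix, hγ, neg_zero, Pi.zero_apply]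
  have h := mulVec_cross_sub (formMatrix_transpose γ) x y
  simp only [hangle, map_zero, LinearMap.zero_apply, zero_dotProduct, zero_smul, add_zero,
    sub_zero, smul_zero] at h
  rwa [sub_sub, sub_eq_zero] at h

end Derivations

section Weights

/-- `A` is block diagonal, with blocks `l, m, n` times a rotation by a right angle, in the frame of
an adapted triple: `(l, m, n)` is the weight of `A` for the corresponding maximal torus of `G₂`. -/
def HasWeights (A : Matrix (Fin 7) (Fin 7) ℝ) (l m n : ℝ) : Prop :=
  ∃ a b c, IsAdaptedTriple a b c ∧ A *ᵥ a = 0 ∧ A *ᵥ b = l • a ×₇ b ∧ A *ᵥ c = m • a ×₇ c ∧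
    A *ᵥ (b ×₇ c) = n • a ×₇ (b ×₇ c)

namespace IsCrossDerivation

variable {A : Matrix (Fin 7) (Fin 7) ℝ}

lemma mulVec_dotProduct_eq_neg (hA : IsCrossDerivation A) (x y : Fin 7 → ℝ) :
    A *ᵥ x ⬝ᵥ y = -(x ⬝ᵥ A *ᵥ y) := by
  rw [mulVec_dotProduct, hA.transpose_eq_neg, Matrix.neg_mulVec, dotProduct_neg]

variable {a b : Fin 7 → ℝ} {μ : ℝ}

lemma transpose_crossMatrix_mul (hA : IsCrossDerivation A) (ha : A *ᵥ a = 0) :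
    (crossMatrix a * A)ᵀ = crossMatrix a * A := by
  rw [Matrix.transpose_mul, hA.transpose_eq_neg, crossMatrix_transpose, neg_mul_neg]
  refine Matrix.ext_of_mulVec_single fun j => ?_
  simp only [← Matrix.mulVec_mulVec, crossMatrix_mulVec, hA.mulVec_cross, ha, map_zero,
    LinearMap.zero_apply, zero_add]

lemma mulVec_eq_of_cross_mulVec_eq (hA : IsCrossDerivation A) (ha₁ : a ⬝ᵥ a = 1)
    (ha : A *ᵥ a = 0) (hb : cross a (A *ᵥ b) = μ • b) : A *ᵥ b = -μ • a ×₇ b := by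
  have hab : a ⬝ᵥ A *ᵥ b = 0 := by
    rw [← neg_eq_zero, ← hA.mulVec_dotProduct_eq_neg, ha, zero_dotProduct]
  have h := cross_cross_self a (A *ᵥ b)
  rw [hb, hab, ha₁, map_smul, zero_smul, one_smul, zero_sub] at h
  rw [neg_smul, h, neg_neg]

lemma exists_hasWeights (hA : IsCrossDerivation A) :
    ∃ l m n, l + m + n = 0 ∧ HasWeights A l m n := by
  obtain ⟨a, ha₁, ha⟩ := exists_unit_mulVec_eq_zero
    (det_eq_zero_of_transpose_eq_neg (by decide) hA.transpose_eq_neg)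
  have hS := hA.transpose_crossMatrix_mul ha
  have hSx (x : Fin 7 → ℝ) : (crossMatrix a * A) *ᵥ x = a ×₇ (A *ᵥ x) := by
    rw [← Matrix.mulVec_mulVec, crossMatrix_mulVec]
  have hSa : ∃ μ : ℝ, (crossMatrix a * A) *ᵥ a = μ • a := ⟨0, by rw [hSx, ha, map_zero, zero_smul]⟩
  obtain ⟨b, hb₁, hab, ν, hb⟩ :=
    exists_unit_eigenvector_orthogonal hS (v := ![a]) (by simpa) (by simp)
  have hSab : ∃ μ : ℝ, (crossMatrix a * A) *ᵥ (a ×₇ b) = μ • a ×₇ b :=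
    ⟨ν, by rw [hSx, hA.mulVec_cross, ha, map_zero, LinearMap.zero_apply, zero_add, ← hSx b, hb,
      map_smul]⟩
  obtain ⟨c, hc₁, habc, ρ, hc⟩ := exists_unit_eigenvector_orthogonal hS (v := ![a, b, a ×₇ b])
    (by simpa [Fin.forall_fin_succ] using ⟨hSa, ⟨ν, hb⟩, hSab⟩) (by simp)
  have habc' : IsAdaptedTriple a b c :=
    ⟨ha₁, hb₁, hc₁, hab 0, habc 0, habc 1, habc 2⟩
  have hAb := hA.mulVec_eq_of_cross_mulVec_eq ha₁ ha (hSx b ▸ hb)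
  have hAc := hA.mulVec_eq_of_cross_mulVec_eq ha₁ ha (hSx c ▸ hc)
  refine ⟨-ν, -ρ, ν + ρ, by ring, a, b, c, habc', ha, hAb, hAc, ?_⟩
  have hflip : a ×₇ b ×₇ c = -(a ×₇ (b ×₇ c)) := by
    rw [cross_anticomm c, habc'.cross_cross_rotate]
  rw [hA.mulVec_cross, hAb, hAc, map_smul, map_smul, LinearMap.smul_apply,
    habc'.cross_cross_comm, hflip]
  module

end IsCrossDerivation

namespace HasWeights

variable {A : Matrix (Fin 7) (Fin 7) ℝ} {l m n l' m' n' : ℝ}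

lemma neg (h : HasWeights A l m n) : HasWeights A (-l) (-m) (-n) := by
  obtain ⟨a, b, c, habc, ha, hb, hc, hbc⟩ := h
  exact ⟨-a, b, c, habc.neg_fst, by rw [Matrix.mulVec_neg, ha, neg_zero], by simpa, by simpa,
    by simpa⟩

lemma swap_fst_snd (h : HasWeights A l m n) : HasWeights A m l n := by
  obtain ⟨a, b, c, habc, ha, hb, hc, hbc⟩ := h
  refine ⟨a, c, b, habc.rotate.rotate.swap, ha, hc, hb, ?_⟩
  rw [cross_anticomm b, Matrix.mulVec_neg, hbc, map_neg, smul_neg]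

lemma swap_snd_thd (h : HasWeights A l m n) : HasWeights A l n m := by
  obtain ⟨a, b, c, habc, ha, hb, hc, hbc⟩ := h
  refine ⟨a, b, b ×₇ c, habc.cross_snd_thd, ha, hb, hbc, ?_⟩
  rw [habc.rotate.cross_cross_snd, Matrix.mulVec_neg, hc, map_neg, smul_neg]

lemma of_eq_fst (h : HasWeights A l m n) (hsum : m + n = m' + n')
    (hsq : m ^ 2 + n ^ 2 = m' ^ 2 + n' ^ 2) : HasWeights A l m' n' := by
  have hprod : (m' - m) * (m' - n) = 0 := by
    obtain rfl : n' = m + n - m' := by linarith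
    linarith
  rcases mul_eq_zero.mp hprod with hm | hm
  · obtain rfl : m = m' := by linarith
    obtain rfl : n = n' := by linarith
    exact h
  · obtain rfl : n = m' := by linarith
    obtain rfl : m = n' := by linarith
    exact h.swap_snd_thd

lemma of_mul_eq (h : HasWeights A l m n) (hsum : l + m + n = 0) (hsum' : l' + m' + n' = 0)
    (hsq : l ^ 2 + m ^ 2 + n ^ 2 = l' ^ 2 + m' ^ 2 + n' ^ 2) (hmul : l * m * n = l' * m' * n') :
    HasWeights A l' m' n' := by
  have hprod : (l' - l) * ((l' - m) * (l' - n)) = 0 := by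
    obtain rfl : n = -l - m := by linarith
    obtain rfl : n' = -l' - m' := by linarith
    linear_combination -(l' / 2) * hsq - hmul
  rcases mul_eq_zero.mp hprod with hl | hprod'
  · obtain rfl : l = l' := by linarith
    exact h.of_eq_fst (by linarith) (by linarith)
  rcases mul_eq_zero.mp hprod' with hl | hl
  · obtain rfl : m = l' := by linarith
    exact h.swap_fst_snd.of_eq_fst (by linarith) (by linarith)
  · obtain rfl : n = l' := by linarith
    exact h.swap_snd_thd.swap_fst_snd.of_eq_fst (by linarith) (by linarith)

lemma of_sq_mul_eq (h : HasWeights A l m n) (hsum : l + m + n = 0) (hsum' : l' + m' + n' = 0)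
    (hsq : l ^ 2 + m ^ 2 + n ^ 2 = l' ^ 2 + m' ^ 2 + n' ^ 2)
    (hmul : (l * m * n) ^ 2 = (l' * m' * n') ^ 2) : HasWeights A l' m' n' := by
  rcases sq_eq_sq_iff_eq_or_eq_neg.mp hmul with hmul | hmul
  · exact h.of_mul_eq hsum hsum' hsq hmul
  · exact h.neg.of_mul_eq (by linarith) hsum' (by linarith) (by linarith)

lemma exists_pullback_eq_weightForm {γ : (Fin 7 → ℝ) [⋀^Fin 2]→ₗ[ℝ] ℝ}
    (hγ : IsCrossDerivation (formMatrix γ)) (h : HasWeights (formMatrix γ) l m n) :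
    ∃ g ∈ phiStabilizer, pullback g.1 γ = weightForm l m n := by
  obtain ⟨a, b, c, habc, ha, hb, hc, hbc⟩ := h
  obtain ⟨g, hg, hframe⟩ := habc.exists_mem_phiStabilizer
  refine ⟨g, hg, twoForm_ext fun x y => ?_⟩
  have hrot {u : Fin 7 → ℝ} {t : ℝ} (hu : formMatrix γ *ᵥ u = t • a ×₇ u)
      (hv : a ×₇ (a ×₇ u) = -u) : formMatrix γ *ᵥ (a ×₇ u) = -t • u := by
    rw [hγ.mulVec_cross, ha, hu, map_zero, LinearMap.zero_apply, zero_add, map_smul, hv, smul_neg,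
      neg_smul]
  have hmulVec : formMatrix γ *ᵥ (g.1 *ᵥ x) =
      g.1 *ᵥ ![0, -l * x 2, l * x 1, -m * x 4, m * x 3, -n * x 6, n * x 5] := by
    simp only [hframe, frame_apply, Matrix.mulVec_add, Matrix.mulVec_smul, ha, hb, hc, hbc,
      hrot hb habc.cross_cross_snd, hrot hc habc.cross_cross_thd, hrot hbc habc.cross_cross_cross]
    simp
    module
  rw [pullback_apply_pair, ← formMatrix_mulVec_dotProduct, hmulVec, mulVec_dotProduct,
    Matrix.mulVec_mulVec, transpose_mul_self_eq_one hg, Matrix.one_mulVec, weightForm_apply]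
  simp [dotProduct, Fin.sum_univ_seven]
  ring

lemma normSq2_eq {γ : (Fin 7 → ℝ) [⋀^Fin 2]→ₗ[ℝ] ℝ}
    (hγ : IsCrossDerivation (formMatrix γ)) (h : HasWeights (formMatrix γ) l m n) :
    normSq2 γ = l ^ 2 + m ^ 2 + n ^ 2 := by
  obtain ⟨g, hg, hgγ⟩ := h.exists_pullback_eq_weightForm hγ
  rw [← normSq2_pullback hg, hgγ, normSq2_eq_normSq, normSq_weightForm]

lemma normSqCube_eq {γ : (Fin 7 → ℝ) [⋀^Fin 2]→ₗ[ℝ] ℝ}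
    (hγ : IsCrossDerivation (formMatrix γ)) (h : HasWeights (formMatrix γ) l m n) :
    normSqCube γ = 36 * (l * m * n) ^ 2 := by
  obtain ⟨g, hg, hgγ⟩ := h.exists_pullback_eq_weightForm hγ
  rw [← normSqCube_pullback hg, hgγ, normSqCube_eq_normSq, normSq_wedge_weightForm]

end HasWeights

end Weights

/-- two elements `α, β` of `Λ²₁₄` are conjugate under the stabilizer of `φ`
iff `|α|² = |β|²` and `|α∧α∧α|² = |β∧β∧β|²`. -/
theorem Lambda2_14_conjugacy (α β : AlternatingMap ℝ (Fin 7 → ℝ) ℝ (Fin 2))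
    (hα : ∀ i : Fin 7, ∑ j : Fin 7, ∑ k : Fin 7, eps i j k * α ![e j, e k] = 0)
    (hβ : ∀ i : Fin 7, ∑ j : Fin 7, ∑ k : Fin 7, eps i j k * β ![e j, e k] = 0) :
    (∃ g : GL (Fin 7) ℝ,
      (∀ x y z : Fin 7 → ℝ,
        phi ((g : Matrix (Fin 7) (Fin 7) ℝ).mulVec x)
            ((g : Matrix (Fin 7) (Fin 7) ℝ).mulVec y)
            ((g : Matrix (Fin 7) (Fin 7) ℝ).mulVec z) = phi x y z) ∧
      (∀ x y : Fin 7 → ℝ,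
        α ![(g : Matrix (Fin 7) (Fin 7) ℝ).mulVec x,
            (g : Matrix (Fin 7) (Fin 7) ℝ).mulVec y] = β ![x, y])) ↔
    (normSq2 α = normSq2 β ∧ normSqCube α = normSqCube β) := by
  have hpullback (g : GL (Fin 7) ℝ) :
      (∀ x y, α ![g.1 *ᵥ x, g.1 *ᵥ y] = β ![x, y]) ↔ pullback g.1 α = β := by
    simp only [← pullback_apply_pair]
    exact ⟨twoForm_ext, fun h _ _ => h ▸ rfl⟩
  simp only [hpullback]
  constructor
  · rintro ⟨g, hg, rfl⟩
    exact ⟨(normSq2_pullback hg α).symm, (normSqCube_pullback hg α).symm⟩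
  · rintro ⟨hsq, hcube⟩
    have hDα := isCrossDerivation_formMatrix hα
    have hDβ := isCrossDerivation_formMatrix hβ
    obtain ⟨l, m, n, hsum, hwα⟩ := hDα.exists_hasWeights
    obtain ⟨l', m', n', hsum', hwβ⟩ := hDβ.exists_hasWeights
    rw [hwα.normSq2_eq hDα, hwβ.normSq2_eq hDβ] at hsq
    rw [hwα.normSqCube_eq hDα, hwβ.normSqCube_eq hDβ] at hcube
    have hwα' := hwα.of_sq_mul_eq hsum hsum' hsq (by linarith)
    exact exists_pullback_eq_of_pullback_eq (hwα'.exists_pullback_eq_weightForm hDα)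
      (hwβ.exists_pullback_eq_weightForm hDβ)

end G2

end
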